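/- Let f be a closed relation on a locally compact, σ-compact Hausdorff space X. Then there exist a compact Hausdorff space X̂ and a topological embedding j : X → X̂ with j(X) open and dense in X̂ such that, with f̂ the closure of (j × j)(f) in X̂ × X̂, one has: for all x, y ∈ X, (j x, j y) ∈ 𝒢f̂ if and only if (x,y) ∈ 𝒢f. Moreover, if X is metrizable then X̂ can be chosen to be metrizable. -/

import Mathlib

/-- The image of a set `A` under a relation `f ⊆ X × Y`. -/
def relImage {X Y : Type*} (f : Set (X × Y)) (A : Set X) : Set Y :=
  {y | ∃ x ∈ A, (x, y) ∈ f}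

/-- The reverse (inverse) relation of `f ⊆ X × Y`. -/
def relInv {X Y : Type*} (f : Set (X × Y)) : Set (Y × X) :=
  {p | (p.2, p.1) ∈ f}

/-- Composition of relations: `relComp g f = g ∘ f` (first `f`, then `g`). -/
def relComp {X Y Z : Type*} (g : Set (Y × Z)) (f : Set (X × Y)) : Set (X × Z) :=
  {p | ∃ y, (p.1, y) ∈ f ∧ (y, p.2) ∈ g}

/-- A relation on `X` is transitive. -/
def RelTrans {X : Type*} (f : Set (X × X)) : Prop :=
  ∀ x y z : X, (x, y) ∈ f → (y, z) ∈ f → (x, z) ∈ f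

/-- `gRel f` is the smallest closed transitive relation containing `f`:
the intersection of all closed transitive relations containing `f`. -/
def gRel {X : Type*} [TopologicalSpace X] (f : Set (X × X)) : Set (X × X) :=
  ⋂₀ {g : Set (X × X) | f ⊆ g ∧ IsClosed g ∧ RelTrans g}

/-- `(Xh, j)` is a dynamic compactification of the dynamical system `(X, f)`: `Xh`
is compact Hausdorff, `j` is a topological embedding with open dense image, and with
`f̂` the closure of `(j × j)(f)` one has `(j x, j y) ∈ 𝒢f̂ ↔ (x, y) ∈ 𝒢f`. -/
def IsDynamicCompactification {X : Type u} [TopologicalSpace X] (f : Set (X × X))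
    (Xh : Type u) [TopologicalSpace Xh] (j : X → Xh) : Prop :=
  CompactSpace Xh ∧ T2Space Xh ∧ Topology.IsEmbedding j ∧
    IsOpen (Set.range j) ∧ Dense (Set.range j) ∧
    ∀ x y : X, (j x, j y) ∈ gRel (closure (Prod.map j j '' f)) ↔ (x, y) ∈ gRel f

/-!
A Lyapunov pair for `f` is a pair `u ≤ v` of continuous functions to `[0, 1]` with `v x ≤ u y`
whenever `(x, y) ∈ f`. The relation `{(x, y) | v x ≤ u y}` is then closed, transitive and
contains `f`, so it contains `𝒢f`. Conversely, Lyapunov pairs detect `𝒢f`. To see this, double the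
space: on `X × Bool` let `(x, i) ≤ (y, j)` mean that `(x, y) ∈ 𝒢f`, or `x = y` and `i ≤ j`. This is
a closed preorder on a locally compact σ-compact space, and such preorders are separated by
monotone functions `h` (Nachbin's form of Urysohn's lemma); put `u = h (·, false)` and
`v = h (·, true)`. Two functions are needed, rather than a single monotone one, because the
points with `(x, x) ∉ 𝒢f` have to be detected as well.

Any compactification to which enough Lyapunov pairs extend is therefore dynamic: the extended pair
is a Lyapunov pair for the closure of `f`. All of them extend to the Stone–Čech compactification.
If `X` is metrizable, it is second countable, so countably many of them suffice, and the closure of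
`X` in a countable product of intervals is metrizable.
-/

open Set Topology TopologicalSpace unitInterval

section NormallyPreordered

variable {Y : Type*} [TopologicalSpace Y] [Preorder Y]

/-- Nachbin's order-theoretic analogue of normality: disjoint closed sets, one lower and one upper,
have disjoint open neighbourhoods, one lower and one upper. -/
class NormallyPreorderedSpace (Y : Type*) [TopologicalSpace Y] [Preorder Y] : Prop where
  exists_isOpen_disjoint {s t : Set Y} (hs : IsClosed s) (hsl : IsLowerSet s) (ht : IsClosed t)
    (htu : IsUpperSet t) (hst : Disjoint s t) :
    ∃ U V : Set Y, IsOpen U ∧ IsLowerSet U ∧ IsOpen V ∧ IsUpperSet V ∧ s ⊆ U ∧ t ⊆ V ∧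
      Disjoint U V

theorem isClosed_lowerClosure_of_isCompact [OrderClosedTopology Y] {K : Set Y}
    (hK : IsCompact K) : IsClosed (lowerClosure K : Set Y) := by
  have : CompactSpace K := isCompact_iff_compactSpace.1 hK
  have hclosed : IsClosed {p : Y × K | p.1 ≤ p.2} := isClosed_le (by fun_prop) (by fun_prop)
  have heq : (lowerClosure K : Set Y) = Prod.fst '' {p : Y × K | p.1 ≤ p.2} := by
    ext x
    simp
  exact heq ▸ isClosedMap_fst_of_compactSpace _ hclosed

theorem isOpen_iUnion_of_inter_subset_interior {X : Type*} [TopologicalSpace X]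
    {A K : ℕ → Set X} (hA : Monotone A) (hK : Monotone K) (hcover : ⋃ n, K n = univ)
    (hAK : ∀ n, A n ∩ K n ⊆ interior (A (n + 1))) : IsOpen (⋃ n, A n) := by
  refine isOpen_iff_mem_nhds.2 fun x hx => ?_
  obtain ⟨m, hm⟩ := mem_iUnion.1 hx
  obtain ⟨k, hk⟩ := iUnion_eq_univ_iff.1 hcover x
  have hint : x ∈ interior (A (max m k + 1)) :=
    hAK _ ⟨hA (le_max_left m k) hm, hK (le_max_right m k) hk⟩
  exact Filter.mem_of_superset (mem_interior_iff_mem_nhds.1 hint) (subset_iUnion A _)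

theorem exists_isClosed_isLowerSet_inter_subset_interior [LocallyCompactSpace Y]
    [OrderClosedTopology Y] {s t K : Set Y} (hs : IsClosed s) (hsl : IsLowerSet s)
    (ht : IsClosed t) (htu : IsUpperSet t) (hst : Disjoint s t) (hK : IsCompact K) :
    ∃ s', IsClosed s' ∧ IsLowerSet s' ∧ Disjoint s' t ∧ s ⊆ s' ∧ s ∩ K ⊆ interior s' := by
  obtain ⟨N, hN, hsN, hNt⟩ := exists_compact_between (hK.inter_left hs) ht.isOpen_compl
    (inter_subset_left.trans hst.subset_compl_right)
  refine ⟨s ∪ lowerClosure N, hs.union (isClosed_lowerClosure_of_isCompact hN),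
    hsl.union (lowerClosure N).lower, hst.union_left ?_, subset_union_left,
    hsN.trans (interior_mono (subset_lowerClosure.trans subset_union_right))⟩
  exact disjoint_compl_left_iff_subset.2 subset_rfl |>.mono_left
    (lowerClosure_min hNt htu.compl)

theorem exists_isClosed_isUpperSet_inter_subset_interior [LocallyCompactSpace Y]
    [OrderClosedTopology Y] {s t K : Set Y} (hs : IsClosed s) (hsl : IsLowerSet s)
    (ht : IsClosed t) (htu : IsUpperSet t) (hst : Disjoint s t) (hK : IsCompact K) :
    ∃ t', IsClosed t' ∧ IsUpperSet t' ∧ Disjoint s t' ∧ t ⊆ t' ∧ t ∩ K ⊆ interior t' := by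
  have : LocallyCompactSpace Yᵒᵈ := ‹LocallyCompactSpace Y›
  obtain ⟨t', hc, hl, hd, hsub, hint⟩ := exists_isClosed_isLowerSet_inter_subset_interior
    (Y := Yᵒᵈ) ht htu.toDual hs hsl.toDual hst.symm hK
  exact ⟨t', hc, hl.ofDual, hd.symm, hsub, hint⟩

variable (Y) in
/-- A disjoint pair of a closed lower set and a closed upper set: the stages of the exhaustion
which proves that locally compact σ-compact closed preorders are normal. -/
structure OrderSeparation where
  lower : Set Y
  upper : Set Y
  isClosed_lower : IsClosed lower
  isLowerSet_lower : IsLowerSet lower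
  isClosed_upper : IsClosed upper
  isUpperSet_upper : IsUpperSet upper
  disjoint : Disjoint lower upper

theorem OrderSeparation.exists_inter_subset_interior [LocallyCompactSpace Y]
    [OrderClosedTopology Y] (P : OrderSeparation Y) {K : Set Y} (hK : IsCompact K) :
    ∃ Q : OrderSeparation Y, P.lower ⊆ Q.lower ∧ P.upper ⊆ Q.upper ∧
      P.lower ∩ K ⊆ interior Q.lower ∧ P.upper ∩ K ⊆ interior Q.upper := by
  obtain ⟨s, hs, hsl, hst, hPs, hsK⟩ := exists_isClosed_isLowerSet_inter_subset_interior
    P.isClosed_lower P.isLowerSet_lower P.isClosed_upper P.isUpperSet_upper P.disjoint hK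
  obtain ⟨t, ht, htu, hst', hPt, htK⟩ := exists_isClosed_isUpperSet_inter_subset_interior
    hs hsl P.isClosed_upper P.isUpperSet_upper hst hK
  exact ⟨⟨s, t, hs, hsl, ht, htu, hst'⟩, hPs, hPt, hsK, htK⟩

instance [LocallyCompactSpace Y] [SigmaCompactSpace Y] [OrderClosedTopology Y] :
    NormallyPreorderedSpace Y where
  exists_isOpen_disjoint {s t} hs hsl ht htu hst := by
    choose next hlower hupper hlowerInt hupperInt using fun (n : ℕ) (P : OrderSeparation Y) =>
      P.exists_inter_subset_interior (isCompact_compactCovering Y n)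
    let P : ℕ → OrderSeparation Y := Nat.rec ⟨s, t, hs, hsl, ht, htu, hst⟩ next
    have hlowerMono : Monotone fun n => (P n).lower :=
      monotone_nat_of_le_succ fun n => hlower n (P n)
    have hupperMono : Monotone fun n => (P n).upper :=
      monotone_nat_of_le_succ fun n => hupper n (P n)
    refine ⟨⋃ n, (P n).lower, ⋃ n, (P n).upper, ?_, ?_, ?_, ?_, ?_, ?_, ?_⟩
    · exact isOpen_iUnion_of_inter_subset_interior hlowerMono (compactCovering_subset Y)
        (iUnion_compactCovering Y) fun n => hlowerInt n (P n)
    · exact isLowerSet_iUnion fun n => (P n).isLowerSet_lower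
    · exact isOpen_iUnion_of_inter_subset_interior hupperMono (compactCovering_subset Y)
        (iUnion_compactCovering Y) fun n => hupperInt n (P n)
    · exact isUpperSet_iUnion fun n => (P n).isUpperSet_upper
    · exact subset_iUnion (fun n => (P n).lower) 0
    · exact subset_iUnion (fun n => (P n).upper) 0
    · refine disjoint_iUnion_left.2 fun m => disjoint_iUnion_right.2 fun n => ?_
      exact (P (max m n)).disjoint.mono (hlowerMono (le_max_left m n))
        (hupperMono (le_max_right m n))

theorem monotone_approx_of_isLowerSet {P : Set Y → Set Y → Prop}
    (hP : ∀ c u, P c u → IsLowerSet u) (n : ℕ) (c : Urysohns.CU P) : Monotone (c.approx n) := by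
  induction n generalizing c with
  | zero =>
    intro x y hxy
    by_cases hy : y ∈ c.U
    · rw [Urysohns.CU.approx, indicator_of_notMem (by simpa using hP _ _ c.P_C_U hxy hy)]
      exact c.approx_nonneg 0 y
    · rw [c.approx_of_notMem_U 0 hy]
      exact c.approx_le_one 0 x
  | succ n ih => exact fun x y hxy => midpoint_le_midpoint (ih _ hxy) (ih _ hxy)

theorem monotone_lim_of_isLowerSet {P : Set Y → Set Y → Prop}
    (hP : ∀ c u, P c u → IsLowerSet u) (c : Urysohns.CU P) : Monotone c.lim :=
  fun _ y hxy => ciSup_mono (c.bddAbove_range_approx y) fun n =>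
    monotone_approx_of_isLowerSet hP n c hxy

theorem exists_isOpen_isLowerSet_between [NormallyPreorderedSpace Y] {d u : Set Y}
    (hd : IsClosed d) (hdl : IsLowerSet d) (hu : IsOpen u) (hul : IsLowerSet u) (hdu : d ⊆ u) :
    ∃ v d', IsOpen v ∧ IsLowerSet v ∧ IsClosed d' ∧ IsLowerSet d' ∧ d ⊆ v ∧ v ⊆ d' ∧ d' ⊆ u := by
  obtain ⟨v, w, hv, hvl, hw, hwu, hdv, huw, hvw⟩ :=
    NormallyPreorderedSpace.exists_isOpen_disjoint hd hdl hu.isClosed_compl hul.compl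
      (disjoint_compl_right_iff_subset.2 hdu)
  exact ⟨v, wᶜ, hv, hvl, hw.isClosed_compl, hwu.compl, hdv, hvw.subset_compl_right,
    compl_subset_comm.1 huw⟩

/-- Nachbin's version of Urysohn's lemma. -/
theorem exists_continuous_monotone_zero_one_of_isClosed [NormallyPreorderedSpace Y] {s t : Set Y}
    (hs : IsClosed s) (hsl : IsLowerSet s) (ht : IsClosed t) (htu : IsUpperSet t)
    (hst : Disjoint s t) : ∃ h : C(Y, I), Monotone h ∧ EqOn h 0 s ∧ EqOn h 1 t := by
  -- `closure v` need not be a lower set, so only a closed lower set between `c` and `u` is kept.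
  let P : Set Y → Set Y → Prop := fun c u =>
    IsLowerSet u ∧ ∃ d, IsClosed d ∧ IsLowerSet d ∧ c ⊆ d ∧ d ⊆ u
  let c : Urysohns.CU P :=
  { C := s
    U := tᶜ
    P_C_U := ⟨htu.compl, s, hs, hsl, subset_rfl, hst.subset_compl_right⟩
    closed_C := hs
    open_U := ht.isOpen_compl
    subset := hst.subset_compl_right
    hP := by
      rintro c u - ⟨hul, d, hd, hdl, hcd, hdu⟩ hu -
      obtain ⟨v, d', hv, hvl, hd', hd'l, hdv, hvd', hd'u⟩ :=
        exists_isOpen_isLowerSet_between hd hdl hu hul hdu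
      have hcl : closure v ⊆ d' := closure_minimal hvd' hd'
      exact ⟨v, hv, hcd.trans hdv, hcl.trans hd'u, ⟨hvl, d, hd, hdl, hcd, hdv⟩,
        ⟨hul, d', hd', hd'l, hcl, hd'u⟩⟩ }
  refine ⟨⟨fun x => ⟨c.lim x, c.lim_mem_Icc x⟩, c.continuous_lim.subtype_mk _⟩,
    monotone_lim_of_isLowerSet (fun _ _ h => h.1) c, fun x hx => ?_, fun x hx => ?_⟩
  · exact Subtype.ext (c.lim_of_mem_C x hx)
  · exact Subtype.ext (c.lim_of_notMem_U x (not_not_intro hx))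

theorem exists_continuous_monotone_lt_of_not_le [NormallyPreorderedSpace Y]
    [ClosedIicTopology Y] [ClosedIciTopology Y] {p q : Y} (hpq : ¬p ≤ q) :
    ∃ h : C(Y, I), Monotone h ∧ h q < h p := by
  obtain ⟨h, hmono, hzero, hone⟩ := exists_continuous_monotone_zero_one_of_isClosed
    (isClosed_Iic (a := q)) (isLowerSet_Iic q) (isClosed_Ici (a := p)) (isUpperSet_Ici p)
    (disjoint_left.2 fun _ hzq hpz => hpq (le_trans hpz hzq))
  refine ⟨h, hmono, ?_⟩
  rw [hzero self_mem_Iic, hone self_mem_Ici]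
  exact zero_lt_one

end NormallyPreordered

section LyapunovPair

variable {X Z : Type*} [TopologicalSpace X] [TopologicalSpace Z]

theorem isClosed_gRel (f : Set (X × X)) : IsClosed (gRel f) :=
  isClosed_sInter fun _ hg => hg.2.1

theorem relTrans_gRel (f : Set (X × X)) : RelTrans (gRel f) :=
  fun x y z hxy hyz g hg => hg.2.2 x y z (hxy g hg) (hyz g hg)

theorem subset_gRel (f : Set (X × X)) : f ⊆ gRel f :=
  subset_sInter fun _ hg => hg.1

theorem gRel_subset {f g : Set (X × X)} (hfg : f ⊆ g) (hg : IsClosed g) (hgt : RelTrans g) :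
    gRel f ⊆ g :=
  sInter_subset_of_mem ⟨hfg, hg, hgt⟩

theorem mapsTo_gRel {f : Set (X × X)} {g : Set (Z × Z)} {j : X → Z} (hj : Continuous j)
    (hfg : MapsTo (Prod.map j j) f g) : MapsTo (Prod.map j j) (gRel f) (gRel g) :=
  gRel_subset (hfg.mono_right (subset_gRel g)) ((isClosed_gRel g).preimage (hj.prodMap hj))
    fun _ _ _ hxy hyz => relTrans_gRel g _ _ _ hxy hyz

/-- A Lyapunov pair for `f`: two functions `u ≤ v` such that every step of `f` goes from a value of
`v` up to a value of `u`. Continuity is required separately. -/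
structure IsLyapunovPair {X α : Type*} [Preorder α] (f : Set (X × X)) (u v : X → α) : Prop where
  le : ∀ x, u x ≤ v x
  le_of_mem : ∀ ⦃x y⦄, (x, y) ∈ f → v x ≤ u y

section Preorder

variable {α : Type*} [Preorder α] [TopologicalSpace α] [OrderClosedTopology α]

theorem IsLyapunovPair.gRel {f : Set (X × X)} {u v : C(X, α)} (h : IsLyapunovPair f u v) :
    IsLyapunovPair (gRel f) u v where
  le := h.le
  le_of_mem _ _ hxy := gRel_subset (g := {p | v p.1 ≤ u p.2}) (fun _ hp => h.le_of_mem hp)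
    (isClosed_le (by fun_prop) (by fun_prop))
    (fun _ y _ hxy hyz => (hxy.trans (h.le y)).trans hyz) hxy

theorem IsLyapunovPair.closure_image {X : Type*} {f : Set (X × X)} {j : X → Z} (hj : DenseRange j)
    {u v : C(Z, α)} (h : IsLyapunovPair f (u ∘ j) (v ∘ j)) :
    IsLyapunovPair (closure (Prod.map j j '' f)) u v where
  le z := hj.induction_on z (isClosed_le u.continuous v.continuous) h.le
  le_of_mem _ _ hxy := closure_minimal (t := {p : Z × Z | v p.1 ≤ u p.2})
    (by rintro _ ⟨_, hp, rfl⟩; exact h.le_of_mem hp)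
    (isClosed_le (by fun_prop) (by fun_prop)) hxy

end Preorder

/-- The preorder on `X × Bool` in which `(x, i) ≤ (y, j)` means that `(x, y) ∈ F`, or `x = y` and
`i ≤ j`. Its monotone functions are the Lyapunov pairs of `F`, with `u` on the `false` copy of `X`
and `v` on the `true` copy. -/
abbrev doubledPreorder {X : Type*} {F : Set (X × X)} (hF : RelTrans F) : Preorder (X × Bool) where
  le p q := (p.1, q.1) ∈ F ∨ p.1 = q.1 ∧ p.2 ≤ q.2
  le_refl p := Or.inr ⟨rfl, le_rfl⟩
  le_trans := by
    rintro ⟨x, i⟩ ⟨y, j⟩ ⟨z, k⟩ (hxy | ⟨rfl, hij⟩) (hyz | ⟨rfl, hjk⟩)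
    · exact Or.inl (hF _ _ _ hxy hyz)
    · exact Or.inl hxy
    · exact Or.inl hyz
    · exact Or.inr ⟨rfl, hij.trans hjk⟩

theorem orderClosedTopology_doubledPreorder [T2Space X] {F : Set (X × X)} (hF : IsClosed F)
    (hFt : RelTrans F) : @OrderClosedTopology (X × Bool) _ (doubledPreorder hFt) := by
  have hbool : IsClosed {p : Bool × Bool | p.1 ≤ p.2} := isClosed_discrete _
  let _ := doubledPreorder hFt
  exact ⟨(hF.preimage (by fun_prop : Continuous fun p : (X × Bool) × (X × Bool) =>
    (p.1.1, p.2.1))).union ((isClosed_eq (by fun_prop) (by fun_prop)).inter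
      (hbool.preimage (by fun_prop : Continuous fun p : (X × Bool) × (X × Bool) =>
        (p.1.2, p.2.2))))⟩

variable [LocallyCompactSpace X] [T2Space X]

theorem exists_isLyapunovPair_lt_of_notMem_gRel [SigmaCompactSpace X] {f : Set (X × X)} {x y : X}
    (hxy : (x, y) ∉ gRel f) : ∃ u v : C(X, I), IsLyapunovPair f u v ∧ u y < v x := by
  let _ := doubledPreorder (relTrans_gRel f)
  have := orderClosedTopology_doubledPreorder (isClosed_gRel f) (relTrans_gRel f)
  have hnle : ¬(x, true) ≤ (y, false) := by
    rintro (hmem | ⟨-, hle⟩)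
    · exact hxy hmem
    · exact Bool.false_lt_true.not_ge hle
  obtain ⟨h, hmono, hlt⟩ := exists_continuous_monotone_lt_of_not_le hnle
  refine ⟨h.comp ⟨(·, false), by fun_prop⟩, h.comp ⟨(·, true), by fun_prop⟩, ⟨?_, ?_⟩, hlt⟩
  · exact fun a => hmono (Or.inr ⟨rfl, Bool.false_le _⟩)
  · exact fun a b hab => hmono (Or.inl (subset_gRel f hab))

theorem exists_countable_isLyapunovPair_lt_of_notMem_gRel [SecondCountableTopology X]
    (f : Set (X × X)) :
    ∃ S : Set (C(X, I) × C(X, I)), S.Countable ∧ (∀ p ∈ S, IsLyapunovPair f p.1 p.2) ∧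
      ∀ x y, (x, y) ∉ gRel f → ∃ p ∈ S, p.1 y < p.2 x := by
  obtain ⟨S, hS, hcount, hunion⟩ := isOpen_biUnion_countable
    {p : C(X, I) × C(X, I) | IsLyapunovPair f p.1 p.2} (fun p => {q : X × X | p.1 q.2 < p.2 q.1})
    fun p _ => isOpen_lt (by fun_prop) (by fun_prop)
  refine ⟨S, hcount, fun p hp => hS hp, fun x y hxy => ?_⟩
  obtain ⟨u, v, huv, hlt⟩ := exists_isLyapunovPair_lt_of_notMem_gRel hxy
  have hmem : (x, y) ∈ ⋃ p ∈ S, {q : X × X | p.1 q.2 < p.2 q.1} :=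
    hunion ▸ mem_biUnion (x := (u, v)) huv hlt
  simpa only [mem_iUnion₂, exists_prop, mem_ofPred_eq] using hmem

end LyapunovPair

section Compactification

theorem isOpen_range_of_isDenseEmbedding {X Z : Type*} [TopologicalSpace X] [TopologicalSpace Z]
    [WeaklyLocallyCompactSpace X] [T2Space Z] {j : X → Z} (hj : IsDenseEmbedding j) :
    IsOpen (range j) := by
  refine isOpen_iff_mem_nhds.2 (forall_mem_range.2 fun x => ?_)
  obtain ⟨K, hK, hxK⟩ := exists_compact_mem_nhds x
  have hclosed : IsClosed (j '' K) := (hK.image hj.continuous).isClosed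
  have hnhds : j '' K ∈ 𝓝 (j x) :=
    hclosed.closure_eq ▸ hj.isDenseInducing.closure_image_mem_nhds hxK
  exact Filter.mem_of_superset hnhds (image_subset_range j K)

variable {X : Type u} [TopologicalSpace X]

theorem isDynamicCompactification_of_extends [WeaklyLocallyCompactSpace X] {Z : Type u}
    [TopologicalSpace Z] [CompactSpace Z] [T2Space Z] {α : Type*} [Preorder α]
    [TopologicalSpace α] [OrderClosedTopology α] {f : Set (X × X)} {j : X → Z}
    (hj : IsDenseEmbedding j)
    (hext : ∀ x y, (x, y) ∉ gRel f → ∃ u v : C(Z, α),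
      IsLyapunovPair f (u ∘ j) (v ∘ j) ∧ u (j y) < v (j x)) :
    IsDynamicCompactification f Z j := by
  refine ⟨‹_›, ‹_›, hj.isEmbedding, isOpen_range_of_isDenseEmbedding hj, hj.dense,
    fun x y => ⟨fun hmem => ?_, fun hmem => ?_⟩⟩
  · by_contra hxy
    obtain ⟨u, v, huv, hlt⟩ := hext x y hxy
    exact hlt.not_ge ((huv.closure_image hj.dense).gRel.le_of_mem hmem)
  · exact mapsTo_gRel hj.continuous
      ((mapsTo_image _ f).mono_right subset_closure) hmem

theorem isDynamicCompactification_stoneCech [LocallyCompactSpace X] [SigmaCompactSpace X]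
    [T2Space X] (f : Set (X × X)) :
    IsDynamicCompactification f (StoneCech X) stoneCechUnit := by
  refine isDynamicCompactification_of_extends (α := I)
    ⟨⟨isEmbedding_stoneCechUnit.isInducing, denseRange_stoneCechUnit⟩,
      isEmbedding_stoneCechUnit.injective⟩ fun x y hxy => ?_
  obtain ⟨u, v, huv, hlt⟩ := exists_isLyapunovPair_lt_of_notMem_gRel hxy
  refine ⟨⟨_, continuous_stoneCechExtend u.continuous⟩,
    ⟨_, continuous_stoneCechExtend v.continuous⟩, ?_, ?_⟩
  · simpa only [ContinuousMap.coe_mk, stoneCechExtend_extends] using huv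
  · simpa only [ContinuousMap.coe_mk, stoneCechExtend_stoneCechUnit] using hlt

theorem isDenseEmbedding_codRestrict_closure_range {X Z : Type*} [TopologicalSpace X]
    [TopologicalSpace Z] {e : X → Z} (he : IsEmbedding e) :
    IsDenseEmbedding (codRestrict e (closure (range e)) fun x => subset_closure ⟨x, rfl⟩) where
  toIsInducing := (he.codRestrict _ _).isInducing
  dense := ((denseRange_inclusion_iff subset_closure).2 subset_rfl).comp
    rangeFactorization_surjective.denseRange (continuous_inclusion subset_closure)
  injective := (he.codRestrict _ _).injective

theorem exists_metrizable_isDynamicCompactification [LocallyCompactSpace X]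
    [SigmaCompactSpace X] [MetrizableSpace X] (f : Set (X × X)) :
    ∃ (Z : Type u) (_ : TopologicalSpace Z) (j : X → Z),
      IsDynamicCompactification f Z j ∧ MetrizableSpace Z := by
  obtain ⟨S, hcount, hpair, hsep⟩ := exists_countable_isLyapunovPair_lt_of_notMem_gRel f
  have : Countable S := hcount.to_subtype
  let _ := metrizableSpaceMetric X
  obtain ⟨ι, hι⟩ := Metric.PiNatEmbed.exists_embedding_to_hilbert_cube (X := X)
  let e : X → (ℕ → I) × (S → I × I) := fun x => (ι x, fun p => (p.1.1 x, p.1.2 x))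
  have hιcont : Continuous ι := hι.continuous
  have he : IsEmbedding e := IsEmbedding.of_comp (f := e) (g := Prod.fst)
    (by fun_prop) continuous_fst hι
  have : CompactSpace (closure (range e)) := isCompact_iff_compactSpace.1 isClosed_closure.isCompact
  refine ⟨closure (range e), inferInstance, _, isDynamicCompactification_of_extends (α := I)
    (isDenseEmbedding_codRestrict_closure_range he) fun x y hxy => ?_, inferInstance⟩
  obtain ⟨p, hp, hlt⟩ := hsep x y hxy
  exact ⟨⟨fun z => (z.1.2 ⟨p, hp⟩).1, by fun_prop⟩, ⟨fun z => (z.1.2 ⟨p, hp⟩).2, by fun_prop⟩,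
    hpair p hp, hlt⟩

end Compactification

theorem exists_dynamic_compactification_general
    {X : Type u} [TopologicalSpace X] [LocallyCompactSpace X]
    [SigmaCompactSpace X] [T2Space X] (f : Set (X × X)) :
    (∃ (Xh : Type u) (t : TopologicalSpace Xh) (j : X → Xh),
      @IsDynamicCompactification X _ f Xh t j) ∧
    (TopologicalSpace.MetrizableSpace X →
      ∃ (Xh : Type u) (t : TopologicalSpace Xh) (j : X → Xh),
        @IsDynamicCompactification X _ f Xh t j ∧
          @TopologicalSpace.MetrizableSpace Xh t) :=
  ⟨⟨StoneCech X, inferInstance, stoneCechUnit, isDynamicCompactification_stoneCech f⟩,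
    fun _ => exists_metrizable_isDynamicCompactification f⟩

/-- Every closed relation on a locally compact, σ-compact Hausdorff
space admits a dynamic compactification; if `X` is metrizable the compactification
may be chosen metrizable. -/
theorem exists_dynamic_compactification
    {X : Type u} [TopologicalSpace X] [LocallyCompactSpace X]
    [SigmaCompactSpace X] [T2Space X]
    (f : Set (X × X)) (hf : IsClosed f) :
    (∃ (Xh : Type u) (t : TopologicalSpace Xh) (j : X → Xh),
      @IsDynamicCompactification X _ f Xh t j) ∧
    (TopologicalSpace.MetrizableSpace X →
      ∃ (Xh : Type u) (t : TopologicalSpace Xh) (j : X → Xh),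
        @IsDynamicCompactification X _ f Xh t j ∧
          @TopologicalSpace.MetrizableSpace Xh t) :=
  exists_dynamic_compactification_general f
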